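/- arXiv:1410.6944 — 6 statements merged into one kernel-verified Lean document; each statement's English description precedes it below -/
import Mathlib

section
/- Let A be a Hopf *-algebra over ℂ and let α : A → A be an admissible bijection. If α is *-preserving, i.e. α(a*) = (α(a))* for all a ∈ A, then α is the identity map on A. -/
open scoped TensorProduct ComplexConjugate ComplexOrder InnerProductSpace
open Coalgebra

universe u

variable {A : Type u} [Ring A] [HopfAlgebra ℂ A] [StarRing A] [StarModule ℂ A]

/-- The star-compatibility axioms making a Hopf algebra over `ℂ` into a Hopf `*`-algebra:
`Δ(a*) = (*⊗*)(Δ a)` (expressed in Sweedler form), `ε(a*) = conj (ε a)`,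
and `S(S(a*)*) = a`.  (The properties `(ab)* = b*a*`, `1* = 1`, involutivity and
conjugate-linearity of `*` are encoded by `StarRing A` and `StarModule ℂ A`.) -/
def IsHopfStar (A : Type u) [Ring A] [HopfAlgebra ℂ A] [StarRing A] [StarModule ℂ A] : Prop :=
  (∀ (a : A) (ι : Type u) (s : Finset ι) (x y : ι → A),
      comul (R := ℂ) a = ∑ i ∈ s, x i ⊗ₜ[ℂ] y i →
      comul (R := ℂ) (star a) = ∑ i ∈ s, star (x i) ⊗ₜ[ℂ] star (y i)) ∧
  (∀ a : A, counit (R := ℂ) (star a) = conj (counit (R := ℂ) a)) ∧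
  (∀ a : A, HopfAlgebra.antipode (R := ℂ)
      (star (HopfAlgebra.antipode (R := ℂ) (star a))) = a)

/-- `α : A → A` is an admissible bijection: (i) a unital algebra homomorphism
(`ℂ`-linearity is part of the data `α : A →ₗ[ℂ] A`); (ii) `α((α(a*))*) = a`;
(iii) `(α⊗α)∘Δ = Δ∘α`; (iv) `id + α` is bijective; (v) `id⊗id + α⊗α` is bijective. -/
structure IsAdmissible (α : A →ₗ[ℂ] A) : Prop where
  map_one : α 1 = 1
  map_mul : ∀ a b : A, α (a * b) = α a * α b
  star_cond : ∀ a : A, α (star (α (star a))) = a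
  comul_comp : ∀ a : A,
    TensorProduct.map α α (comul (R := ℂ) a) = comul (R := ℂ) (α a)
  bij_add : Function.Bijective ((LinearMap.id + α : A →ₗ[ℂ] A))
  bij_tensor :
    Function.Bijective ((LinearMap.id + TensorProduct.map α α : A ⊗[ℂ] A →ₗ[ℂ] A ⊗[ℂ] A))

/-- The `α`-twisted antipode `S_α = S ∘ α`. -/
def twistedAntipode (α : A →ₗ[ℂ] A) : A →ₗ[ℂ] A :=
  HopfAlgebra.antipode (R := ℂ) ∘ₗ α

/-- If an admissible bijection on a Hopf `*`-algebra is `*`-preserving, it is the identity. -/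
theorem star_preserving_admissible_eq_id (hA : IsHopfStar A)
    (α : A →ₗ[ℂ] A) (hα : IsAdmissible α)
    (hstar : ∀ a : A, α (star a) = star (α a)) :
    ∀ a : A, α a = a := by
  -- Since `α` commutes with `*`, condition (ii) says that `α` is an involution.
  have hinv : ∀ a : A, α (α a) = a := fun a => by
    simpa [hstar] using hα.star_cond a
  intro a
  -- `id + α` takes the same value `a + α a` at `a` and at `α a`, and it is injective.
  apply hα.bij_add.injective
  simp [hinv, add_comm]
end

section
/- Let A be a Hopf *-algebra over ℂ and let α : A → A be an admissible bijection, with α-twisted antipode S_α = S∘α. Then S_α((S_α(a*))*) = a for all a ∈ A, and S_α is an anti-homomorphism: S_α(ab) = S_α(b)·S_α(a) for all a, b ∈ A. -/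
/-!
The antipode of a Hopf algebra is anti-multiplicative, so `S ∘ α` is anti-multiplicative
whenever `α` is multiplicative.

For the involution identity the point is that `α` commutes with `S`. Condition (ii) makes `α`
injective, and an injective comultiplicative linear map preserves the counit
(`IsAdmissible.counit_apply`), so `α` is a bialgebra endomorphism. Then `S ∘ α` and `α ∘ S` are
a left and a right inverse of `α` for the convolution product on `A →ₗ[ℂ] A`, hence they coincide
(`IsAdmissible.antipode_apply`). Consequently
`S(α(S(α(a*))*)) = S(α(α(S(a*))*)) = S(S(a*)*) = a`, where the middle equality is condition (ii)
applied to `S(a*)*`.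
-/


open scoped TensorProduct ComplexConjugate ComplexOrder InnerProductSpace
open Coalgebra

universe u

variable {A : Type u} [Ring A] [HopfAlgebra ℂ A] [StarRing A] [StarModule ℂ A]

open HopfAlgebra WithConv

lemma IsAdmissible.injective {α : A →ₗ[ℂ] A} (hα : IsAdmissible α) : Function.Injective α := by
  refine (injective_iff_map_eq_zero α).2 fun b hb ↦ ?_
  simpa [hb] using (congrArg star (hα.star_cond (star b))).symm

/-- An admissible `α` preserves the counit: `α (∑ ε(α a₁) a₂) = ∑ ε((α a)₁) (α a)₂ = α a`, so
`∑ ε(α a₁) a₂ = a` by injectivity, and applying `ε` gives the claim. -/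
lemma IsAdmissible.counit_apply {α : A →ₗ[ℂ] A} (hα : IsAdmissible α) (a : A) :
    counit (R := ℂ) (α a) = counit (R := ℂ) a := by
  have hr : ∑ i ∈ (ℛ ℂ a).index, α ((ℛ ℂ a).left i) ⊗ₜ[ℂ] α ((ℛ ℂ a).right i)
      = comul (R := ℂ) (α a) := by
    rw [← hα.comul_comp, ← (ℛ ℂ a).eq, map_sum]
    simp
  have h1 : ∑ i ∈ (ℛ ℂ a).index,
      counit (R := ℂ) (α ((ℛ ℂ a).left i)) • α ((ℛ ℂ a).right i) = α a :=
    sum_counit_smul (R := ℂ) ⟨(ℛ ℂ a).index, _, _, hr⟩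
  have h2 : ∑ i ∈ (ℛ ℂ a).index,
      counit (R := ℂ) (α ((ℛ ℂ a).left i)) • (ℛ ℂ a).right i = a :=
    hα.injective (by simpa using h1)
  -- Apply `ε ∘ α` to `h3` and `ε` to `h2`: both give `∑ ε(α a₁) ε(a₂)`.
  have h3 : ∑ i ∈ (ℛ ℂ a).index,
      counit (R := ℂ) ((ℛ ℂ a).right i) • (ℛ ℂ a).left i = a := by
    simpa only [map_sum, TensorProduct.rid_tmul, one_smul] using
      congrArg (TensorProduct.rid ℂ A) (sum_tmul_counit_eq (R := ℂ) (ℛ ℂ a))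
  calc counit (R := ℂ) (α a)
    _ = ∑ i ∈ (ℛ ℂ a).index,
        counit (R := ℂ) (α ((ℛ ℂ a).left i)) * counit (R := ℂ) ((ℛ ℂ a).right i) := by
      rw [← congrArg (fun x ↦ counit (R := ℂ) (α x)) h3]
      simp [mul_comm]
    _ = counit (R := ℂ) a := by
      rw [← congrArg (fun x ↦ counit (R := ℂ) x) h2]
      simp

/-- An admissible `α` commutes with the antipode: `S ∘ α` is a left and `α ∘ S` a right convolution
inverse of `α`. -/
lemma IsAdmissible.antipode_apply {α : A →ₗ[ℂ] A} (hα : IsAdmissible α) (a : A) :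
    antipode ℂ (α a) = α (antipode ℂ a) := by
  have hl : toConv (antipode ℂ ∘ₗ α) * toConv α = 1 := by
    ext x
    have h := mul_antipode_rTensor_comul_apply (R := ℂ) (α x)
    rw [← hα.comul_comp, hα.counit_apply] at h
    simpa [← (ℛ ℂ x).eq] using h
  have hr : toConv α * toConv (α ∘ₗ antipode ℂ) = 1 := by
    ext x
    have h := congrArg α (sum_mul_antipode_eq_smul (R := ℂ) (ℛ ℂ x))
    rw [map_sum, map_smul, hα.map_one, ← Algebra.algebraMap_eq_smul_one] at h
    simpa [← (ℛ ℂ x).eq, hα.map_mul] using h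
  exact congr($(left_inv_eq_right_inv hl hr) a)

/-- The twisted antipode satisfies `S_α((S_α(a*))*) = a` and is an anti-homomorphism. -/
theorem twistedAntipode_star_antihom (hA : IsHopfStar A)
    (α : A →ₗ[ℂ] A) (hα : IsAdmissible α) :
    (∀ a : A, twistedAntipode α (star (twistedAntipode α (star a))) = a) ∧
    (∀ a b : A, twistedAntipode α (a * b) =
      twistedAntipode α b * twistedAntipode α a) := by
  refine ⟨fun a ↦ ?_, fun a b ↦ ?_⟩
  · have h := hα.star_cond (star (antipode ℂ (star a)))
    rw [star_star] at h
    simp only [twistedAntipode, LinearMap.comp_apply]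
    rw [hα.antipode_apply (star a), h]
    exact hA.2.2 a
  · simp [twistedAntipode, hα.map_mul, antipode_mul_antidistrib]
end

section
/- Let A be a Hopf *-algebra over ℂ, D a complex inner product space, π a *-representation of A on D, and η : A → D a cocycle for π. Then for all a, c ∈ K₁ := ker ε and all b ∈ A, one has ⟨η((ab)*), η(c)⟩ = ⟨η(a*), η(bc)⟩; in other words, the sesquilinear expression φ̃(a⊗b) = ⟨η(a*), η(b)⟩ on K₁ ⊗ K₁ is balanced over A and hence descends to a linear map φ : K₁ ⊗_A K₁ → ℂ. -/
open scoped TensorProduct ComplexConjugate ComplexOrder InnerProductSpace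
open Coalgebra

universe u

variable {A : Type u} [Ring A] [HopfAlgebra ℂ A] [StarRing A] [StarModule ℂ A]

variable {D : Type u} [NormedAddCommGroup D] [InnerProductSpace ℂ D]

/-- A `*`-representation of `A` on the complex inner product space `D`:
a unital algebra homomorphism into the linear endomorphisms of `D` such that
`⟨π(a*)ξ, ζ⟩ = ⟨ξ, π(a)ζ⟩`. -/
def IsStarRep (π : A →ₐ[ℂ] Module.End ℂ D) : Prop :=
  ∀ (a : A) (ξ ζ : D), ⟪π (star a) ξ, ζ⟫_ℂ = ⟪ξ, π a ζ⟫_ℂ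

/-- A cocycle for the representation `π`: `η(ab) = π(a)η(b) + ε(b)·η(a)`. -/
def IsCocycle (π : A →ₐ[ℂ] Module.End ℂ D) (η : A →ₗ[ℂ] D) : Prop :=
  ∀ a b : A, η (a * b) = π a (η b) + counit (R := ℂ) b • η a

/-- A generating functional on `A`: a linear functional with `L(1) = 0`,
`L(a*) = conj (L a)`, and `L(a*a)` a nonnegative real for `a ∈ ker ε`. -/
structure IsGenFunctional (L : A →ₗ[ℂ] ℂ) : Prop where
  map_one : L 1 = 0
  hermitian : ∀ a : A, L (star a) = conj (L a)
  cond_pos : ∀ a : A, counit (R := ℂ) a = 0 → 0 ≤ L (star a * a)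

/-- `η` yields the coboundary of `L`:
`L(ab) = ε(a)L(b) + L(a)ε(b) + ⟨η(a*), η(b)⟩`. -/
def YieldsCoboundary (η : A →ₗ[ℂ] D) (L : A →ₗ[ℂ] ℂ) : Prop :=
  ∀ a b : A, L (a * b) =
    counit (R := ℂ) a * L b + L a * counit (R := ℂ) b + ⟪η (star a), η b⟫_ℂ

/-- `η` is `α`-real: `⟨η(a), η(b)⟩ = ⟨η((S_α b)*), η(S_α(a*))⟩`. -/
def IsAlphaReal (α : A →ₗ[ℂ] A) (η : A →ₗ[ℂ] D) : Prop :=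
  ∀ a b : A, ⟪η a, η b⟫_ℂ =
    ⟪η (star (twistedAntipode α b)), η (twistedAntipode α (star a))⟫_ℂ

/-- The sesquilinear form `φ̃(a⊗b) = ⟨η(a*), η(b)⟩` is balanced over `A` on `K₁ = ker ε`:
`⟨η((ab)*), η(c)⟩ = ⟨η(a*), η(bc)⟩` for `a, c ∈ K₁` and `b ∈ A`. -/
theorem cocycle_form_balanced (hA : IsHopfStar A)
    (π : A →ₐ[ℂ] Module.End ℂ D) (η : A →ₗ[ℂ] D)
    (hπ : IsStarRep π) (hη : IsCocycle π η) :
    ∀ a c : A, counit (R := ℂ) a = 0 → counit (R := ℂ) c = 0 →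
      ∀ b : A, ⟪η (star (a * b)), η c⟫_ℂ = ⟪η (star a), η (b * c)⟫_ℂ := by
  intro a c ha hc b
  have hsa : counit (R := ℂ) (star a) = 0 := by rw [hA.2.1, ha, map_zero]
  -- Since `ε(a*) = 0` and `ε(c) = 0`, the cocycle identity reduces to `η(b*a*) = π(b*)η(a*)` and
  -- `η(bc) = π(b)η(c)`; the claim is then that `π(b*)` is a formal adjoint of `π(b)`.
  rw [star_mul, hη, hη b c, hsa, hc, zero_smul, zero_smul, add_zero, add_zero, hπ]
end

section
/- (Schürmann GNS construction.) Let A be a Hopf *-algebra over ℂ and L : A → ℂ a generating functional. Then there exist a complex inner product space D, a *-representation π of A on D, and a nondegenerate cocycle η : A → D for π which yields the coboundary of L, i.e. L(ab) = ε(a)L(b) + L(a)ε(b) + ⟨η(a*), η(b)⟩ for all a, b ∈ A. -/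
/-!
Write `P b = b - ε(b) 1` for the projection of `A` onto `ker ε`.  Since `L` is hermitian and
positive on squares from `ker ε`, the sesquilinear form `⟪a, b⟫ = L ((P a)* (P b))` is a
semi-inner product on `A`.  Take `D` to be its Hausdorff quotient and `η : A → D` the quotient map,
which is onto.  The map `x ↦ a (P x)` has the formal adjoint `x ↦ a* (P x)` for this form, so
it preserves the null space and descends to an endomorphism `π a` of `D`; multiplicativity holds
because `P` fixes the left ideal `ker ε`.  The cocycle identity is `a b = a (P b) + ε(b) a`, and
expanding `L ((a - ε(a) 1) (b - ε(b) 1))` with `L 1 = 0` gives the coboundary formula.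
-/


open scoped TensorProduct ComplexConjugate ComplexOrder InnerProductSpace
open Coalgebra

universe u

variable {A : Type u} [Ring A] [HopfAlgebra ℂ A] [StarRing A] [StarModule ℂ A]

variable {D : Type u} [NormedAddCommGroup D] [InnerProductSpace ℂ D]

/-- The data of the Schürmann GNS construction for a generating functional `L`:
a complex inner product space, a `*`-representation, and a nondegenerate cocycle
yielding the coboundary of `L`. -/
structure SchuermannGNS (A : Type u) [Ring A] [HopfAlgebra ℂ A] [StarRing A]
    [StarModule ℂ A] (L : A →ₗ[ℂ] ℂ) where
  space : Type u
  [instNorm : NormedAddCommGroup space]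
  [instInner : InnerProductSpace ℂ space]
  π : A →ₐ[ℂ] Module.End ℂ space
  η : A →ₗ[ℂ] space
  star_rep : IsStarRep π
  cocycle : IsCocycle π η
  nondegenerate : Dense (Set.range η)
  coboundary : YieldsCoboundary η L

/-- The Hausdorff quotient of a semi-inner product space, as an inner product space receiving a
surjective linear map that preserves the inner product. -/
theorem exists_hausdorff_quotient {V : Type u} [AddCommGroup V] [Module ℂ V]
    (c : PreInnerProductSpace.Core ℂ V) :
    ∃ (D : Type u) (_ : NormedAddCommGroup D) (_ : InnerProductSpace ℂ D) (q : V →ₗ[ℂ] D),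
      Function.Surjective q ∧ ∀ a b : V, ⟪q a, q b⟫_ℂ = c.inner a b := by
  let _ : PreInnerProductSpace.Core ℂ V := c
  let _ : SeminormedAddCommGroup V := InnerProductSpace.Core.toSeminormedAddCommGroup (𝕜 := ℂ)
  let _ : InnerProductSpace ℂ V := InnerProductSpace.ofCore c
  exact ⟨SeparationQuotient V, inferInstance, inferInstance,
    (SeparationQuotient.mkCLM ℂ V : V →L[ℂ] SeparationQuotient V).toLinearMap,
    SeparationQuotient.surjective_mk, fun a b => SeparationQuotient.inner_mk_mk a b⟩

/-- The projection `b ↦ b - ε(b) 1` of `A` onto the kernel of the counit. -/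
def counitProj (A : Type u) [Ring A] [HopfAlgebra ℂ A] : A →ₗ[ℂ] A :=
  LinearMap.id - (Algebra.linearMap ℂ A) ∘ₗ (counit (R := ℂ))

theorem counitProj_apply {A : Type u} [Ring A] [HopfAlgebra ℂ A] (b : A) :
    counitProj A b = b - counit (R := ℂ) b • (1 : A) := by
  simp [counitProj, Algebra.algebraMap_eq_smul_one]

theorem counit_counitProj {A : Type u} [Ring A] [HopfAlgebra ℂ A] (b : A) :
    counit (R := ℂ) (counitProj A b) = 0 := by
  simp [counitProj_apply]

theorem counitProj_mul_counitProj {A : Type u} [Ring A] [HopfAlgebra ℂ A]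
    (a b : A) : counitProj A (a * counitProj A b) = a * counitProj A b := by
  rw [counitProj_apply, Bialgebra.counit_mul, counit_counitProj]
  simp

theorem star_counitProj (hA : IsHopfStar A) (b : A) :
    star (counitProj A b) = counitProj A (star b) := by
  simp [counitProj_apply, hA.2.1]

/-- The semi-inner product `⟪a, b⟫ = L ((P a)* (P b))` attached to a generating functional `L`. -/
@[reducible] def gnsCore (L : A →ₗ[ℂ] ℂ) (hL : IsGenFunctional L) :
    PreInnerProductSpace.Core ℂ A where
  inner a b := L (star (counitProj A a) * counitProj A b)
  conj_inner_symm a b := by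
    rw [← hL.hermitian]; simp
  re_inner_nonneg a :=
    (Complex.le_def.1 (hL.cond_pos _ (counit_counitProj a))).1
  add_left a b c := by simp [add_mul]
  smul_left a b r := by simp

/-- Schürmann's GNS construction: every generating functional arises as the
coboundary of a nondegenerate cocycle for a `*`-representation. -/
theorem genFunctional_gns (hA : IsHopfStar A)
    (L : A →ₗ[ℂ] ℂ) (hL : IsGenFunctional L) :
    Nonempty (SchuermannGNS A L) := by
  obtain ⟨D, i₁, i₂, q, hq, hin⟩ := exists_hausdorff_quotient (gnsCore L hL)
  replace hin : ∀ a b : A, ⟪q a, q b⟫_ℂ = L (star (counitProj A a) * counitProj A b) := hin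
  have hadj : ∀ a x y : A,
      ⟪q (a * counitProj A x), q y⟫_ℂ = ⟪q x, q (star a * counitProj A y)⟫_ℂ := by
    intro a x y
    rw [hin, hin, counitProj_mul_counitProj, counitProj_mul_counitProj, star_mul, mul_assoc]
  have hwd : ∀ a x y : A, q x = q y → q (a * counitProj A x) = q (a * counitProj A y) := by
    intro a x y h
    refine ext_inner_right ℂ fun v => ?_
    obtain ⟨z, rfl⟩ := hq v
    rw [hadj, hadj, h]
  -- `x ↦ a (P x)` is descended along `q` through a set-theoretic section `s`; by `hwd` the result
  -- does not depend on `s`.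
  let s : D → A := Function.surjInv hq
  have hs : ∀ d, q (s d) = d := Function.surjInv_eq hq
  let T : A → D → D := fun a d => q (a * counitProj A (s d))
  have hT : ∀ a x, T a (q x) = q (a * counitProj A x) := fun a x => hwd a _ _ (hs _)
  have hq1 : q 1 = 0 := by
    rw [← inner_self_eq_zero (𝕜 := ℂ), hin]
    simp [counitProj_apply]
  have hqP : ∀ x, q (counitProj A x) = q x := by
    intro x; simp [counitProj_apply, hq1]
  let E : A → Module.End ℂ D := fun a =>
    { toFun := T a
      map_add' := by
        intro d e
        obtain ⟨x, rfl⟩ := hq d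
        obtain ⟨y, rfl⟩ := hq e
        rw [← map_add, hT, hT, hT, map_add, mul_add, map_add]
      map_smul' := by
        intro r d
        obtain ⟨x, rfl⟩ := hq d
        rw [← map_smul, hT, hT, map_smul, mul_smul_comm, map_smul, RingHom.id_apply] }
  have hE : ∀ a x, E a (q x) = q (a * counitProj A x) := hT
  let El : A →ₗ[ℂ] Module.End ℂ D :=
    { toFun := E
      map_add' := by
        intro a b; ext d
        obtain ⟨x, rfl⟩ := hq d
        rw [LinearMap.add_apply, hE, hE, hE, add_mul, map_add]
      map_smul' := by
        intro r a; ext d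
        obtain ⟨x, rfl⟩ := hq d
        rw [RingHom.id_apply, LinearMap.smul_apply, hE, hE, smul_mul_assoc, map_smul] }
  let π : A →ₐ[ℂ] Module.End ℂ D := AlgHom.ofLinearMap El
    (by
      ext d
      obtain ⟨x, rfl⟩ := hq d
      exact (hE 1 x).trans (by rw [one_mul, hqP, Module.End.one_apply]))
    (by
      intro a b; ext d
      obtain ⟨x, rfl⟩ := hq d
      change E (a * b) (q x) = E a (E b (q x))
      rw [hE, hE, hE, counitProj_mul_counitProj, mul_assoc])
  have hπ : ∀ a x, π a (q x) = q (a * counitProj A x) := hE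
  refine ⟨{ space := D, π := π, η := q, star_rep := ?_, cocycle := ?_,
            nondegenerate := hq.denseRange, coboundary := ?_ }⟩
  · intro a ξ ζ
    obtain ⟨x, rfl⟩ := hq ξ
    obtain ⟨y, rfl⟩ := hq ζ
    rw [hπ, hπ, hadj, star_star]
  · intro a b
    rw [hπ, ← map_smul, ← map_add, counitProj_apply, mul_sub, mul_smul_comm, mul_one,
      sub_add_cancel]
  · intro a b
    rw [hin, star_counitProj hA, star_star, counitProj_apply, counitProj_apply]
    simp [mul_sub, sub_mul, hL.map_one]
    ring
end

section
/- Let A be a Hopf *-algebra over ℂ and L : A → ℂ a generating functional. Suppose H₁ and H₂ are complex Hilbert spaces, π₁, π₂ are *-representations of A on H₁, H₂ respectively, and η₁ : A → H₁, η₂ : A → H₂ are nondegenerate cocycles each of which yields the coboundary of L. Then η₁ and η₂ are unitarily equivalent: there exists a unitary (isometric linear isomorphism) U : H₁ → H₂ with U(η₁(a)) = η₂(a) for all a ∈ A. -/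
open scoped TensorProduct ComplexConjugate ComplexOrder InnerProductSpace
open Coalgebra

universe u

variable {A : Type u} [Ring A] [HopfAlgebra ℂ A] [StarRing A] [StarModule ℂ A]

variable {D : Type u} [NormedAddCommGroup D] [InnerProductSpace ℂ D]

/-- Two nondegenerate cocycles on Hilbert spaces yielding the coboundary of the same
generating functional are unitarily equivalent. -/
theorem coboundary_cocycles_unitarily_equivalent (hA : IsHopfStar A)
    (L : A →ₗ[ℂ] ℂ) (hL : IsGenFunctional L)
    {H₁ : Type u} [NormedAddCommGroup H₁] [InnerProductSpace ℂ H₁] [CompleteSpace H₁]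
    {H₂ : Type u} [NormedAddCommGroup H₂] [InnerProductSpace ℂ H₂] [CompleteSpace H₂]
    (π₁ : A →ₐ[ℂ] Module.End ℂ H₁) (π₂ : A →ₐ[ℂ] Module.End ℂ H₂)
    (η₁ : A →ₗ[ℂ] H₁) (η₂ : A →ₗ[ℂ] H₂)
    (hπ₁ : IsStarRep π₁) (hπ₂ : IsStarRep π₂)
    (hη₁ : IsCocycle π₁ η₁) (hη₂ : IsCocycle π₂ η₂)
    (hd₁ : Dense (Set.range η₁)) (hd₂ : Dense (Set.range η₂))
    (hcob₁ : YieldsCoboundary η₁ L) (hcob₂ : YieldsCoboundary η₂ L) :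
    ∃ U : H₁ ≃ₗᵢ[ℂ] H₂, ∀ a : A, U (η₁ a) = η₂ a := by
  have h_norm : ∀ a : A, ‖η₂ a‖ = ‖η₁ a‖ := by
    intro a
    -- Both cocycles satisfy `⟪η a, η a⟫ = L (a* a) - ε (a*) L a - L (a*) ε a`.
    have h : ⟪η₂ a, η₂ a⟫_ℂ = ⟪η₁ a, η₁ a⟫_ℂ := by
      simpa using (hcob₂ (star a) a).symm.trans (hcob₁ (star a) a)
    rw [norm_eq_sqrt_re_inner (𝕜 := ℂ), norm_eq_sqrt_re_inner (𝕜 := ℂ), h]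
  -- `η₁ a ↦ η₂ a` is isometric from one dense subspace onto another, so it extends to a unitary.
  exact ⟨(LinearEquiv.refl ℂ A).extendOfIsometry η₁ η₂ hd₁ hd₂ h_norm,
    fun a => LinearEquiv.extendOfIsometry_eq (LinearEquiv.refl ℂ A) η₁ η₂ hd₁ hd₂ h_norm a⟩
end

section
/- Let A be a Hopf *-algebra over ℂ, α : A → A an admissible bijection with α-twisted antipode S_α = S∘α, and η : A → D a cocycle for a *-representation π on a complex inner product space D. Then for every a ∈ A with Δ(a) = ∑_{i∈s} xᵢ ⊗ yᵢ (a finite sum): (i) η(S_α(a)) = −∑_{i∈s} π(S_α(xᵢ))(η(α(yᵢ))); (ii) η(α(a)) = −∑_{i∈s} π(α(xᵢ))(η(S_α(yᵢ))). -/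
/-!
Applying a cocycle `η` to the antipode identities `∑ S(xᵢ) yᵢ = ε(b) 1` and `∑ xᵢ S(yᵢ) = ε(b) 1`
kills the right-hand sides, since `η(1) = 0`. Expanding the left-hand sides by the cocycle identity
and collapsing the terms carrying a counit (by counitality and `ε ∘ S = ε`) gives both formulas for
`α = id`. As `α` is comultiplicative, `Δ(α a) = ∑ α(xᵢ) ⊗ α(yᵢ)`, so the general case is the
untwisted one at `b = α a`.
-/

open scoped TensorProduct ComplexConjugate ComplexOrder InnerProductSpace
open Coalgebra

universe u

variable {A : Type u} [Ring A] [HopfAlgebra ℂ A] [StarRing A] [StarModule ℂ A]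

variable {D : Type u} [NormedAddCommGroup D] [InnerProductSpace ℂ D]

omit [StarRing A] [StarModule ℂ A] in
/-- Right counitality in Sweedler form, `∑ ε(yᵢ) xᵢ = b`. -/
lemma sum_counit_smul_right {b : A} {ι : Type*} (r : Coalgebra.Repr ℂ b ι) :
    ∑ i ∈ r.index, counit (R := ℂ) (r.right i) • r.left i = b := by
  simpa only [map_sum, TensorProduct.rid_tmul, one_smul]
    using congrArg (TensorProduct.rid ℂ A) (sum_tmul_counit_eq r)

omit [StarRing A] [StarModule ℂ A] in
lemma IsCocycle.map_one {π : A →ₐ[ℂ] Module.End ℂ D} {η : A →ₗ[ℂ] D} (hη : IsCocycle π η) :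
    η 1 = 0 := by
  simpa using hη 1 1

omit [StarRing A] [StarModule ℂ A] in
lemma IsCocycle.map_antipode {π : A →ₐ[ℂ] Module.End ℂ D} {η : A →ₗ[ℂ] D} (hη : IsCocycle π η)
    {b : A} {ι : Type*} (r : Coalgebra.Repr ℂ b ι) :
    η (HopfAlgebra.antipode ℂ b) =
      -∑ i ∈ r.index, π (HopfAlgebra.antipode ℂ (r.left i)) (η (r.right i)) := by
  have h := congrArg η (HopfAlgebra.sum_antipode_mul_eq_smul r)
  have hc := congrArg (fun t => η (HopfAlgebra.antipode ℂ t)) (sum_counit_smul_right r)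
  simp only [map_sum, map_smul, hη _ _, hη.map_one, smul_zero, Finset.sum_add_distrib] at h hc
  rw [hc] at h
  exact eq_neg_of_add_eq_zero_right h

omit [StarRing A] [StarModule ℂ A] in
lemma IsCocycle.map_eq_neg_sum {π : A →ₐ[ℂ] Module.End ℂ D} {η : A →ₗ[ℂ] D} (hη : IsCocycle π η)
    {b : A} {ι : Type*} (r : Coalgebra.Repr ℂ b ι) :
    η b = -∑ i ∈ r.index, π (r.left i) (η (HopfAlgebra.antipode ℂ (r.right i))) := by
  have h := congrArg η (HopfAlgebra.sum_mul_antipode_eq_smul r)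
  have hc := congrArg η (sum_counit_smul_right r)
  simp only [map_sum, map_smul, hη _ _, hη.map_one, smul_zero, Finset.sum_add_distrib,
    HopfAlgebra.counit_antipode] at h hc
  rw [hc] at h
  exact eq_neg_of_add_eq_zero_right h

/-- Lemma 2.1 (i)-(ii): if `Δ(a) = ∑ᵢ xᵢ ⊗ yᵢ` then
`η(S_α(a)) = −∑ᵢ π(S_α(xᵢ))(η(α(yᵢ)))` and `η(α(a)) = −∑ᵢ π(α(xᵢ))(η(S_α(yᵢ)))`. -/
theorem cocycle_twistedAntipode_formulas (hA : IsHopfStar A)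
    (α : A →ₗ[ℂ] A) (hα : IsAdmissible α)
    (π : A →ₐ[ℂ] Module.End ℂ D) (η : A →ₗ[ℂ] D)
    (hπ : IsStarRep π) (hη : IsCocycle π η) :
    ∀ (a : A) (ι : Type u) (s : Finset ι) (x y : ι → A),
      comul (R := ℂ) a = ∑ i ∈ s, x i ⊗ₜ[ℂ] y i →
      (η (twistedAntipode α a) =
        -∑ i ∈ s, π (twistedAntipode α (x i)) (η (α (y i)))) ∧
      (η (α a) =
        -∑ i ∈ s, π (α (x i)) (η (twistedAntipode α (y i)))) := by
  intro a ι s x y h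
  let r : Coalgebra.Repr ℂ (α a) ι :=
    { index := s, left := fun i => α (x i), right := fun i => α (y i)
      eq := by rw [← hα.comul_comp a, h, map_sum]; rfl }
  exact ⟨hη.map_antipode r, hη.map_eq_neg_sum r⟩
end
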